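/- For any relatively prime integers n₁ ≥ 3 and n₂ ≥ 2, there exist regular languages L₁, L₂ over the unary alphabet {b} with tc(Lᵢ) = nᵢ (i = 1, 2) such that tc(L₁ ∪ L₂) = n₁·n₂. -/

import Mathlib

/-- An incomplete DFA over alphabet `α` with state type `σ`:
the transition function is a partial function, modelled as `Option`-valued. -/
structure IDFA (α : Type) (σ : Type) where
  /-- The (partial) transition function. -/
  step : σ → α → Option σ
  /-- The start state. -/
  start : σ
  /-- The set of accepting states. -/
  accept : Set σ

namespace IDFA

variable {α σ : Type}

/-- The extended (partial) transition function on words. -/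
def evalFrom (A : IDFA α σ) (q : σ) (w : List α) : Option σ :=
  w.foldl (fun oq a => oq.bind fun p => A.step p a) (some q)

/-- Running the automaton from the start state. -/
def eval (A : IDFA α σ) (w : List α) : Option σ :=
  A.evalFrom A.start w

/-- The language recognized by an incomplete DFA: words on which the run is
defined and ends in an accepting state. -/
def accepts (A : IDFA α σ) : Set (List α) :=
  {w | ∃ q ∈ A.accept, A.eval w = some q}

/-- `#tr(A)`: the number of (defined) transitions of `A`. -/
noncomputable def trCount (A : IDFA α σ) : ℕ :=
  {p : σ × α | (A.step p.1 p.2).isSome}.ncard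

/-- `#tr(A, b)`: the number of `b`-transitions of `A`. -/
noncomputable def trCountOn (A : IDFA α σ) (b : α) : ℕ :=
  {q : σ | (A.step q b).isSome}.ncard

/-- An incomplete DFA is connected if every state is reachable from the start state. -/
def Connected (A : IDFA α σ) : Prop :=
  ∀ q : σ, ∃ w : List α, A.evalFrom A.start w = some q

end IDFA

/-- A language is regular iff it is recognized by some incomplete DFA with
finitely many states. -/
def IsRegularLang {α : Type} (L : Set (List α)) : Prop :=
  ∃ (σ : Type) (_ : Finite σ) (A : IDFA α σ), A.accepts = L

/-- `tc(L)`: the transition complexity of `L`, i.e. the minimal number of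
transitions of any incomplete DFA recognizing `L`. -/
noncomputable def tc {α : Type} (L : Set (List α)) : ℕ :=
  sInf {n | ∃ (σ : Type) (_ : Finite σ) (A : IDFA α σ), A.accepts = L ∧ A.trCount = n}

/-- `tc_b(L)`: the `b`-transition complexity of `L`, i.e. the minimal number of
`b`-transitions of any incomplete DFA recognizing `L`. -/
noncomputable def tcOn {α : Type} (L : Set (List α)) (b : α) : ℕ :=
  sInf {n | ∃ (σ : Type) (_ : Finite σ) (A : IDFA α σ), A.accepts = L ∧ A.trCountOn b = n}

/-- `sc(L)`: the (incomplete-DFA) state complexity of `L`, i.e. the number of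
states of a minimal incomplete DFA recognizing `L`. -/
noncomputable def sc {α : Type} (L : Set (List α)) : ℕ :=
  sInf {n | ∃ (σ : Type) (_ : Finite σ) (A : IDFA α σ), A.accepts = L ∧ Nat.card σ = n}

/-!
A group language is recognised by the Cayley graph of a finite group `G`, a complete automaton with
`|G| * |α|` transitions. When no nonzero translation fixes the accepting set, distinct elements of
`G` have distinct residual languages, and every automaton for the language needs all of those
transitions. The words over `{b}` of length divisible by `n` are the case `G = ℤ/n`, accepting set
`{0}`. For coprime `m`, `n` the pair `(1, 1)` generates `ℤ/m × ℤ/n`, in which the union of two such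
languages has the cross `{x = 0} ∪ {y = 0}` as accepting set; a translation moving one bar of the
cross would have to send it into the other, which contains no full line.
-/

namespace IDFA

variable {α σ : Type} (A : IDFA α σ)

theorem evalFrom_append_singleton (q : σ) (w : List α) (a : α) :
    A.evalFrom q (w ++ [a]) = (A.evalFrom q w).bind fun p => A.step p a := by
  simp [evalFrom]

theorem evalFrom_append (q : σ) (u v : List α) :
    A.evalFrom q (u ++ v) = (A.evalFrom q u).bind fun p => A.evalFrom p v := by
  induction v using List.reverseRecOn with
  | nil => simp [evalFrom]
  | append_singleton v a ih =>
    simp only [← List.append_assoc, evalFrom_append_singleton, ih, Option.bind_assoc]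

theorem eval_append (u v : List α) :
    A.eval (u ++ v) = (A.eval u).bind fun q => A.evalFrom q v :=
  A.evalFrom_append A.start u v

theorem eval_append_singleton (w : List α) (a : α) :
    A.eval (w ++ [a]) = (A.eval w).bind fun q => A.step q a :=
  A.evalFrom_append_singleton A.start w a

theorem preimage_append_accepts_eq_of_eval_eq {u u' : List α} (h : A.eval u = A.eval u') :
    (u ++ ·) ⁻¹' A.accepts = (u' ++ ·) ⁻¹' A.accepts := by
  ext v
  simp only [accepts, Set.mem_preimage, Set.mem_ofPred_eq, eval_append, h]

theorem exists_step_isSome_of_append_cons_mem_accepts {u v : List α} {a : α}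
    (h : u ++ a :: v ∈ A.accepts) : ∃ q, A.eval u = some q ∧ (A.step q a).isSome := by
  obtain ⟨p, -, hp⟩ := h
  rw [List.append_cons, eval_append, Option.bind_eq_some_iff] at hp
  obtain ⟨r, hr, -⟩ := hp
  rw [eval_append_singleton, Option.bind_eq_some_iff] at hr
  obtain ⟨q, hq, hqr⟩ := hr
  exact ⟨q, hq, Option.isSome_of_eq_some hqr⟩

theorem card_le_trCount [Finite α] [Finite σ] {ι : Type*} (u : ι → List α) (a : ι → α)
    (h_live : ∀ i, ∃ v, u i ++ a i :: v ∈ A.accepts)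
    (h_inj : Function.Injective fun i => ((u i ++ ·) ⁻¹' A.accepts, a i)) :
    Nat.card ι ≤ A.trCount := by
  choose v hv using h_live
  choose q h_eval h_step using fun i =>
    A.exists_step_isSome_of_append_cons_mem_accepts (hv i)
  have h_transition_inj : Function.Injective fun i => (q i, a i) := by
    intro i j hij
    obtain ⟨hq, ha⟩ := Prod.mk.inj hij
    have h_eval_eq : A.eval (u i) = A.eval (u j) := by rw [h_eval, h_eval, hq]
    exact h_inj (Prod.ext (A.preimage_append_accepts_eq_of_eval_eq h_eval_eq) ha)
  rw [← Set.ncard_range_of_injective h_transition_inj]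
  exact Set.ncard_le_ncard (Set.range_subset_iff.mpr h_step)

end IDFA

section TransitionComplexity

variable {α : Type} {L : Set (List α)}

theorem tc_accepts_le_trCount {σ : Type} [Finite σ] (A : IDFA α σ) : tc A.accepts ≤ A.trCount :=
  Nat.sInf_le ⟨σ, inferInstance, A, rfl, rfl⟩

theorem IsRegularLang.exists_trCount_eq_tc (hL : IsRegularLang L) :
    ∃ (σ : Type) (_ : Finite σ) (A : IDFA α σ), A.accepts = L ∧ A.trCount = tc L := by
  obtain ⟨σ, hσ, A, hA⟩ := hL
  exact Nat.sInf_mem (s := {n | ∃ (σ : Type) (_ : Finite σ) (A : IDFA α σ),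
    A.accepts = L ∧ A.trCount = n}) ⟨A.trCount, σ, hσ, A, hA, rfl⟩

theorem IsRegularLang.card_le_tc [Finite α] (hL : IsRegularLang L) {ι : Type*}
    (u : ι → List α) (a : ι → α) (h_live : ∀ i, ∃ v, u i ++ a i :: v ∈ L)
    (h_inj : Function.Injective fun i => ((u i ++ ·) ⁻¹' L, a i)) :
    Nat.card ι ≤ tc L := by
  obtain ⟨σ, _, A, rfl, h_min⟩ := hL.exists_trCount_eq_tc
  exact h_min ▸ A.card_le_trCount u a h_live h_inj

end TransitionComplexity

section GroupLanguage

variable {α G : Type} [AddGroup G] (φ : α → G) (S : Set G)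

/-- The group language of `S ⊆ G`: the words whose image under the monoid homomorphism
`List α → G` extending `φ` lies in `S`. The group is written additively but need not be
commutative. -/
def groupLang : Set (List α) :=
  {w | (w.map φ).sum ∈ S}

/-- The Cayley graph of `G` with respect to `φ`, as a (complete) automaton started at `0` with
accepting set `S`, recognising `groupLang φ S`. -/
def cayleyAutomaton : IDFA α G where
  step g a := some (g + φ a)
  start := 0
  accept := S

theorem cayleyAutomaton_eval (w : List α) :
    (cayleyAutomaton φ S).eval w = some (w.map φ).sum := by
  induction w using List.reverseRecOn with
  | nil => rfl
  | append_singleton w a ih =>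
    rw [IDFA.eval_append_singleton, ih]
    simp [cayleyAutomaton]

theorem cayleyAutomaton_accepts : (cayleyAutomaton φ S).accepts = groupLang φ S := by
  ext w
  simp only [IDFA.accepts, cayleyAutomaton_eval, Set.mem_ofPred_eq, Option.some.injEq,
    exists_eq_right']
  rfl

theorem cayleyAutomaton_trCount :
    (cayleyAutomaton φ S).trCount = Nat.card G * Nat.card α := by
  simp [IDFA.trCount, cayleyAutomaton, Set.ncard_univ]

theorem isRegularLang_groupLang [Finite G] : IsRegularLang (groupLang φ S) :=
  ⟨G, inferInstance, cayleyAutomaton φ S, cayleyAutomaton_accepts φ S⟩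

variable {φ S}

theorem append_mem_groupLang {u v : List α} :
    u ++ v ∈ groupLang φ S ↔ (u.map φ).sum + (v.map φ).sum ∈ S := by
  simp [groupLang]

theorem sum_map_eq_of_preimage_append_groupLang_eq
    (h_gen : Function.Surjective fun w : List α => (w.map φ).sum)
    (h_stab : ∀ d, (∀ x, d + x ∈ S ↔ x ∈ S) → d = 0) {u u' : List α}
    (h : (u ++ ·) ⁻¹' groupLang φ S = (u' ++ ·) ⁻¹' groupLang φ S) :
    (u.map φ).sum = (u'.map φ).sum := by
  refine sub_eq_zero.mp (h_stab _ fun x => ?_)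
  obtain ⟨v, hv⟩ := h_gen (-(u'.map φ).sum + x)
  have h_residual : u ++ v ∈ groupLang φ S ↔ u' ++ v ∈ groupLang φ S := Set.ext_iff.mp h v
  simpa only [append_mem_groupLang, hv, ← add_assoc, ← sub_eq_add_neg, sub_self, zero_add]
    using h_residual

theorem tc_groupLang [Finite α] [Finite G]
    (h_gen : Function.Surjective fun w : List α => (w.map φ).sum) (h_nonempty : S.Nonempty)
    (h_stab : ∀ d, (∀ x, d + x ∈ S ↔ x ∈ S) → d = 0) :
    tc (groupLang φ S) = Nat.card G * Nat.card α := by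
  apply le_antisymm
  · rw [← cayleyAutomaton_accepts, ← cayleyAutomaton_trCount φ S]
    exact tc_accepts_le_trCount _
  · choose word h_word using h_gen
    obtain ⟨s, hs⟩ := h_nonempty
    rw [← Nat.card_prod]
    refine (isRegularLang_groupLang φ S).card_le_tc (fun p : G × α => word p.1) Prod.snd ?_ ?_
    · rintro ⟨g, a⟩
      refine ⟨word (-(g + φ a) + s), ?_⟩
      rw [List.append_cons, append_mem_groupLang]
      simpa only [List.map_append, List.map_singleton, List.sum_append, List.sum_singleton, h_word,
        add_neg_cancel_left] using hs
    · rintro ⟨g, a⟩ ⟨g', a'⟩ h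
      obtain ⟨h_residual, ha⟩ := Prod.mk.inj h
      have h_sum := sum_map_eq_of_preimage_append_groupLang_eq
        (fun g => ⟨word g, h_word g⟩) h_stab h_residual
      exact Prod.ext (by simpa only [h_word] using h_sum) ha

end GroupLanguage

section UnaryMultiples

/-- The unary language `(bⁿ)*`, the witness of transition complexity `n`; the letter `b` is `()`. -/
def unaryMultiples (n : ℕ) : Set (List Unit) :=
  {w | n ∣ w.length}

theorem sum_map_one_surjective {R : Type*} [AddMonoidWithOne R]
    (h : Function.Surjective (Nat.cast : ℕ → R)) :
    Function.Surjective fun w : List Unit => (w.map fun _ => (1 : R)).sum := by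
  intro r
  obtain ⟨k, rfl⟩ := h r
  exact ⟨List.replicate k (), by simp⟩

theorem unaryMultiples_eq_groupLang (n : ℕ) :
    unaryMultiples n = groupLang (fun _ => (1 : ZMod n)) {0} := by
  ext w
  simp [unaryMultiples, groupLang, ZMod.natCast_eq_zero_iff]

theorem unaryMultiples_union_eq_groupLang (m n : ℕ) :
    unaryMultiples m ∪ unaryMultiples n =
      groupLang (fun _ => (1 : ZMod m × ZMod n)) {p | p.1 = 0 ∨ p.2 = 0} := by
  ext w
  simp [unaryMultiples, groupLang, ZMod.natCast_eq_zero_iff]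

theorem isRegularLang_unaryMultiples (n : ℕ) [NeZero n] : IsRegularLang (unaryMultiples n) :=
  unaryMultiples_eq_groupLang n ▸ isRegularLang_groupLang _ _

theorem tc_unaryMultiples (n : ℕ) [NeZero n] : tc (unaryMultiples n) = n := by
  have h_gen := sum_map_one_surjective (ZMod.natCast_zmod_surjective (n := n))
  rw [unaryMultiples_eq_groupLang, tc_groupLang h_gen (Set.singleton_nonempty 0)]
  · simp
  · exact fun d hd => by simpa using hd 0

theorem natCast_zmod_prod_surjective {m n : ℕ} [NeZero m] [NeZero n] (h : m.Coprime n) :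
    Function.Surjective (Nat.cast : ℕ → ZMod m × ZMod n) := by
  have : NeZero (m * n) := ⟨mul_ne_zero (NeZero.ne m) (NeZero.ne n)⟩
  intro p
  obtain ⟨k, hk⟩ := ZMod.natCast_zmod_surjective ((ZMod.chineseRemainder h).symm p)
  exact ⟨k, by rw [← map_natCast (ZMod.chineseRemainder h), hk, RingEquiv.apply_symm_apply]⟩

theorem eq_zero_of_add_maps_cross {G H : Type*} [AddGroup G] [AddGroup H] [Nontrivial G]
    [Nontrivial H] {d : G × H}
    (h : ∀ x : G × H, x.1 = 0 ∨ x.2 = 0 → (d + x).1 = 0 ∨ (d + x).2 = 0) : d = 0 := by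
  obtain ⟨x, hx⟩ := exists_ne (-d.1)
  obtain ⟨y, hy⟩ := exists_ne (-d.2)
  have h_fst : d.1 = 0 := by
    simpa [add_eq_zero_iff_neg_eq, hy.symm] using h (0, y) (Or.inl rfl)
  have h_snd : d.2 = 0 := by
    simpa [add_eq_zero_iff_neg_eq, hx.symm] using h (x, 0) (Or.inr rfl)
  exact Prod.ext h_fst h_snd

theorem tc_unaryMultiples_union {m n : ℕ} (hm : 2 ≤ m) (hn : 2 ≤ n) (h : m.Coprime n) :
    tc (unaryMultiples m ∪ unaryMultiples n) = m * n := by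
  have : Fact (1 < m) := ⟨hm⟩
  have : Fact (1 < n) := ⟨hn⟩
  have : NeZero m := ⟨by omega⟩
  have : NeZero n := ⟨by omega⟩
  have h_gen := sum_map_one_surjective (natCast_zmod_prod_surjective h)
  rw [unaryMultiples_union_eq_groupLang, tc_groupLang h_gen ⟨0, Or.inl rfl⟩]
  · simp
  · exact fun d hd => eq_zero_of_add_maps_cross fun x => (hd x).mpr

end UnaryMultiples

/-- for relatively prime `n₁ ≥ 3`, `n₂ ≥ 2` there exist unary
regular languages with `tc(Lᵢ) = nᵢ` and `tc(L₁ ∪ L₂) = n₁·n₂`. -/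
theorem tc_union_unary_lower_bound
    (n₁ n₂ : ℕ) (hn₁ : 3 ≤ n₁) (hn₂ : 2 ≤ n₂) (hcop : Nat.Coprime n₁ n₂) :
    ∃ L₁ L₂ : Set (List Unit), IsRegularLang L₁ ∧ IsRegularLang L₂ ∧
      tc L₁ = n₁ ∧ tc L₂ = n₂ ∧ tc (L₁ ∪ L₂) = n₁ * n₂ := by
  have : NeZero n₁ := ⟨by omega⟩
  have : NeZero n₂ := ⟨by omega⟩
  exact ⟨unaryMultiples n₁, unaryMultiples n₂,
    isRegularLang_unaryMultiples n₁, isRegularLang_unaryMultiples n₂,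
    tc_unaryMultiples n₁, tc_unaryMultiples n₂,
    tc_unaryMultiples_union (by omega) hn₂ hcop⟩
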